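/- arXiv:1901.07514 — 5 statements merged into one kernel-verified Lean document; each statement's English description precedes it below -/
import Mathlib

section
/- Let q be a prime with q ≡ 3 (mod 8), write q = 2t+1, let α ∈ (ℤ/qℤ)* be a generator of the cyclic group QR(q) of nonzero quadratic residues, and let β = 2. Then the set S_2 = { {α^i, 2α^i} : i = 1,…,t } is a strong Skolem starter for ℤ/qℤ: it is a starter, its t pair-sums α^i(1+2) are pairwise distinct, and its pairs can be indexed as {x_i, y_i}, i = 1,…,t, with canonical integer representatives satisfying y_i > x_i and y_i − x_i = i. -/
/-!
Write `q = 2t + 1`. An element `α` of order `t` in `(ℤ/qℤ)*` has as powers exactly the `t`-th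
roots of unity, i.e. (Euler's criterion) the nonzero squares. Hence for any nonsquare `c` the powers
of `α` and their `c`-multiples together exhaust the nonzero elements (`powers_union_mul_powers`).
Since `q ≡ 3 (mod 8)`, both `2` and `-1` are nonsquares: `c = 2` gives the partition into pairs, and
`c = -1` gives the differences `±α ^ i`. The sums `3 * α ^ i` are distinct because `3 ≠ 0` unless
`q = 3`, where there is only one pair.

For the Skolem property, the gap between the representatives of `2x` and `x` is an integer in
`{1, …, t}` congruent to `x` or `-x` (`gap_spec`). If two powers of `α` have the same gap, they agree
up to sign, and the sign is `+` because `-1` is not a square. So the gap map is an injection of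
`{1, …, t}` into itself, hence a bijection.
-/

/-- The powers of an element of order `(q - 1) / 2`, together with their multiples by a nonsquare,
are all the nonzero elements of `ℤ/qℤ`. -/
lemma powers_union_mul_powers {q t : ℕ} [Fact q.Prime] (hqt : q = 2 * t + 1) (ht : 0 < t)
    {α : ZMod q} (hα : α ≠ 0) (hord : orderOf α = t) {c : ZMod q} (hc : ¬ IsSquare c) :
    (fun i : ℕ => α ^ i) '' Set.Icc 1 t ∪ (fun i : ℕ => c * α ^ i) '' Set.Icc 1 t
      = {x : ZMod q | x ≠ 0} := by
  have hdiv : q / 2 = t := by omega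
  have hc0 : c ≠ 0 := by rintro rfl; exact hc (IsSquare.zero)
  have hneg : ∀ x : ZMod q, x ≠ 0 → ¬ IsSquare x → x ^ t = -1 := fun x hx hns => by
    rw [ZMod.euler_criterion q hx, hdiv] at hns
    have h := ZMod.pow_div_two_eq_neg_one_or_one q hx
    rw [hdiv] at h
    exact h.resolve_left hns
  have hmem : ∀ x : ZMod q, x ^ t = 1 → ∃ i ∈ Set.Icc 1 t, α ^ i = x := fun x hx => by
    have : NeZero t := ⟨ht.ne'⟩
    have hprim : IsPrimitiveRoot α t := hord ▸ IsPrimitiveRoot.orderOf α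
    obtain ⟨i, hi, rfl⟩ := hprim.eq_pow_of_pow_eq_one hx
    -- exponents are normalised to `1, …, t` rather than `0, …, t - 1`
    rcases Nat.eq_zero_or_pos i with rfl | hpos
    · exact ⟨t, ⟨ht, le_rfl⟩, by rw [hprim.pow_eq_one, pow_zero]⟩
    · exact ⟨i, ⟨hpos, hi.le⟩, rfl⟩
  ext x
  simp only [Set.mem_union, Set.mem_image, Set.mem_ofPred_eq]
  constructor
  · rintro (⟨i, -, rfl⟩ | ⟨i, -, rfl⟩)
    · exact pow_ne_zero _ hα
    · exact mul_ne_zero hc0 (pow_ne_zero _ hα)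
  · intro hx
    by_cases hsq : IsSquare x
    · left
      rw [ZMod.euler_criterion q hx, hdiv] at hsq
      exact hmem x hsq
    · right
      obtain ⟨i, hi, h⟩ := hmem (x / c) (by
        rw [div_pow, hneg x hx hsq, hneg c hc0 hc, div_self (neg_ne_zero.mpr one_ne_zero)])
      exact ⟨i, hi, by rw [h, mul_div_cancel₀ _ hc0]⟩

/-- The gap between the canonical representatives of `2x` and `x` is the one of `x`, `-x` whose
representative lies in `{1, …, t}`. -/
lemma gap_spec {q t : ℕ} [NeZero q] (hqt : q = 2 * t + 1) {x : ZMod q} (hx : x ≠ 0) :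
    (((2 * x).val : ℤ) - (x.val : ℤ)).natAbs ∈ Set.Icc 1 t ∧
      (((((2 * x).val : ℤ) - (x.val : ℤ)).natAbs : ZMod q) = x ∨
        ((((2 * x).val : ℤ) - (x.val : ℤ)).natAbs : ZMod q) = -x) := by
  have hlt : x.val < q := ZMod.val_lt x
  have hpos : 0 < x.val := Nat.pos_of_ne_zero (by rwa [Ne, ZMod.val_eq_zero])
  have hval : (2 * x).val = (x.val + x.val) % q := by rw [two_mul, ZMod.val_add]
  rcases le_or_gt x.val t with h | h
  · have h2 : (2 * x).val = x.val + x.val := by rw [hval, Nat.mod_eq_of_lt (by omega)]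
    have hg : (((2 * x).val : ℤ) - (x.val : ℤ)).natAbs = x.val := by omega
    rw [hg]
    exact ⟨⟨hpos, h⟩, Or.inl (ZMod.natCast_zmod_val x)⟩
  · -- doubling wraps around exactly once, so the representative of `2x` is the smaller one
    have h2 : (2 * x).val = x.val + x.val - q := by
      rw [hval, Nat.mod_eq_sub_mod (by omega), Nat.mod_eq_of_lt (by omega)]
    have hg : (((2 * x).val : ℤ) - (x.val : ℤ)).natAbs = q - x.val := by omega
    rw [hg]
    refine ⟨⟨by omega, by omega⟩, Or.inr ?_⟩
    rw [Nat.cast_sub hlt.le, ZMod.natCast_self, ZMod.natCast_zmod_val, zero_sub]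

/-- Let `q ≡ 3 (mod 8)` be prime, `q = 2t+1`, and let `α` be a generator of
the cyclic group `QR(q)` of nonzero quadratic residues of `ℤ/qℤ` (i.e. `α ≠ 0`, `α` is a
square, and `orderOf α = t = |QR(q)|`).  Then
`S₂ = { {α^i, 2α^i} : i = 1,…,t }` is a strong Skolem starter for `ℤ/qℤ`:
* the elements `α^i, 2α^i` (`i = 1,…,t`) are exactly the nonzero elements of `ℤ/qℤ`;
* the differences `±(2α^i − α^i)` (`i = 1,…,t`) are exactly the nonzero elements;
* the `t` sums `α^i + 2α^i = α^i(1+2)` are pairwise distinct (the starter is strong);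
* (Skolem) the map sending `i` to `|val(2α^i) − val(α^i)|` (the positive gap between the
  canonical representatives of the two members of the `i`-th pair) is a bijection from
  `{1,…,t}` onto `{1,…,t}`, i.e. the pairs can be re-indexed as `{xᵢ, yᵢ}` with
  `yᵢ > xᵢ` and `yᵢ − xᵢ = i` for all `i = 1,…,t`. -/
theorem strong_skolem_starter_beta_two
    (q t : ℕ) (hq : Nat.Prime q) (hq8 : q % 8 = 3) (hqt : q = 2 * t + 1)
    (α : ZMod q) (hα : α ≠ 0) (hαsq : IsSquare α) (hord : orderOf α = t) :
    -- starter property, part 1: the pair entries cover the nonzero elements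
    ((fun i : ℕ => α ^ i) '' Set.Icc 1 t ∪ (fun i : ℕ => 2 * α ^ i) '' Set.Icc 1 t
        = {x : ZMod q | x ≠ 0}) ∧
    -- starter property, part 2: the ± differences cover the nonzero elements
    ((fun i : ℕ => 2 * α ^ i - α ^ i) '' Set.Icc 1 t
        ∪ (fun i : ℕ => α ^ i - 2 * α ^ i) '' Set.Icc 1 t = {x : ZMod q | x ≠ 0}) ∧
    -- strong: the t pair-sums α^i(1+2) are pairwise distinct
    Set.InjOn (fun i : ℕ => α ^ i + 2 * α ^ i) (Set.Icc 1 t) ∧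
    -- Skolem: i ↦ |val(2α^i) − val(α^i)| is a bijection {1,…,t} → {1,…,t}
    Set.BijOn
      (fun i : ℕ => (((2 * α ^ i : ZMod q).val : ℤ) - ((α ^ i : ZMod q).val : ℤ)).natAbs)
      (Set.Icc 1 t) (Set.Icc 1 t) := by
  have : Fact q.Prime := ⟨hq⟩
  have ht : 0 < t := by omega
  have h2 : ¬ IsSquare (2 : ZMod q) := by
    rw [ZMod.exists_sq_eq_two_iff (by omega)]; omega
  have hm1 : ¬ IsSquare (-1 : ZMod q) := by
    rw [ZMod.exists_sq_eq_neg_one_iff]; omega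
  have hinj : Set.InjOn (fun i : ℕ => α ^ i) (Set.Icc 1 t) := by
    intro i hi j hj hij
    -- cancelling one factor `α` moves the exponents into `{0, …, t - 1}`
    obtain ⟨i, rfl⟩ := Nat.exists_eq_add_of_le' hi.1
    obtain ⟨j, rfl⟩ := Nat.exists_eq_add_of_le' hj.1
    simp only [pow_succ] at hij
    have hprim : IsPrimitiveRoot α t := hord ▸ IsPrimitiveRoot.orderOf α
    exact congrArg (· + 1) (hprim.pow_inj hi.2 hj.2 (mul_right_cancel₀ hα hij))
  refine ⟨powers_union_mul_powers hqt ht hα hord h2, ?_, ?_, ?_⟩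
  · rw [← powers_union_mul_powers hqt ht hα hord hm1]
    congr 1 <;> refine congrArg (· '' Set.Icc 1 t) (funext fun i => ?_) <;> ring
  · intro i hi j hj hij
    by_cases hq3 : q = 3
    · have := hi.1; have := hi.2; have := hj.1; have := hj.2
      omega
    · have h3 : (3 : ZMod q) ≠ 0 := fun h => hq3 <| by
        have hdvd : q ∣ 3 := (ZMod.natCast_eq_zero_iff 3 q).1 (by exact_mod_cast h)
        exact (Nat.prime_dvd_prime_iff_eq hq Nat.prime_three).1 hdvd
      refine hinj hi hj (mul_left_cancel₀ h3 ?_)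
      linear_combination hij
  · have hmaps : Set.MapsTo
        (fun i : ℕ => (((2 * α ^ i : ZMod q).val : ℤ) - ((α ^ i : ZMod q).val : ℤ)).natAbs)
        (Set.Icc 1 t) (Set.Icc 1 t) := fun i _ => (gap_spec hqt (pow_ne_zero i hα)).1
    have hne : ∀ i j : ℕ, α ^ i ≠ -α ^ j := fun i j h => by
      refine hm1 ?_
      have : (-1 : ZMod q) = α ^ i / α ^ j := by
        rw [h, neg_div, div_self (pow_ne_zero j hα)]
      rw [this]
      exact (hαsq.pow i).div (hαsq.pow j)
    have hgap : Set.InjOn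
        (fun i : ℕ => (((2 * α ^ i : ZMod q).val : ℤ) - ((α ^ i : ZMod q).val : ℤ)).natAbs)
        (Set.Icc 1 t) := by
      intro i hi j hj hij
      have hcast := congrArg (Nat.cast : ℕ → ZMod q) hij
      simp only at hcast
      apply hinj hi hj
      rcases (gap_spec hqt (pow_ne_zero i hα)).2 with ha | ha <;>
        rcases (gap_spec hqt (pow_ne_zero j hα)).2 with hb | hb <;>
        rw [ha, hb] at hcast
      · exact hcast
      · exact absurd hcast (hne i j)
      · exact absurd hcast.symm (hne j i)
      · exact neg_injective hcast
    exact ((Set.finite_Icc 1 t).injOn_iff_bijOn_of_mapsTo hmaps).1 hgap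
end

section
/- Let q be a prime with q ≡ 3 (mod 8), write q = 2t+1, let α ∈ (ℤ/qℤ)* be a generator of the cyclic group QR(q) of nonzero quadratic residues, and let β = (q+1)/2 (the inverse of 2 in ℤ/qℤ). Then the set S_β = { {α^i, βα^i} : i = 1,…,t } is a strong Skolem starter for ℤ/qℤ: it is a starter, its t pair-sums α^i(1+β) are pairwise distinct, and its pairs can be indexed as {x_i, y_i}, i = 1,…,t, with canonical integer representatives satisfying y_i > x_i and y_i − x_i = i. -/
/-!
Since `q ≡ 3 (mod 8)`, neither `-1` nor `2` is a square modulo `q`, so `β = 1/2` is not a square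
either. Write `A = {α, …, α ^ t}`, a set of `t` nonzero squares. If `u * v` is not a square, the
cosets `u A` and `v A` are disjoint and so, by counting, cover all `2 t` nonzero elements
(`union_cosets`). With `(u, v) = (1, β)` this is the partition property, and with
`(u, v) = (β - 1, 1 - β) = (-β, β)` the difference property. The sums are the multiples of
`α ^ i` by `1 + β = 3/2`, which is nonzero for `q ≠ 3`; for `q = 3` there is only one pair.

For the Skolem property, let `a ∈ {1, …, q - 1}` represent `x`. Then `x / 2` is represented by
`a / 2` or `(a + q) / 2`, according to the parity of `a`, so the gap `d` between the two
representatives is `a / 2` or `(q - a) / 2` (`two_mul_gap`). Hence `1 ≤ d ≤ t` and `2 d = ± x`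
modulo `q`. Equal gaps for `α ^ i` and `α ^ j` give `α ^ i = ± α ^ j`, where the minus sign is
excluded because `-1` is not a square; an injective self-map of `{1, …, t}` is bijective.
-/

lemma pow_injOn_Icc {q t : ℕ} [Fact q.Prime] {α : ZMod q} (hα : α ≠ 0) (hord : orderOf α = t) :
    Set.InjOn (fun i : ℕ => α ^ i) (Set.Icc 1 t) := by
  intro i hi j hj h
  obtain ⟨hi1, hi2⟩ := hi
  obtain ⟨hj1, hj2⟩ := hj
  -- Shifting the exponents down by one moves them into `{0, …, t - 1}`.
  have h' : α ^ (i - 1) = α ^ (j - 1) := by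
    apply mul_right_cancel₀ hα
    rw [← pow_succ, ← pow_succ, Nat.sub_add_cancel hi1, Nat.sub_add_cancel hj1]
    exact h
  have := pow_injOn_Iio_orderOf (x := α) (show i - 1 < orderOf α by omega)
    (show j - 1 < orderOf α by omega) h'
  omega

/-- Two cosets `u A`, `v A` of `A = {α, …, α ^ t}`, for a square `α` of order `t = (q - 1) / 2`,
cover the nonzero elements as soon as `u * v` is not a square. -/
lemma union_cosets {q t : ℕ} [Fact q.Prime] (hqt : q = 2 * t + 1) {α : ZMod q} (hα : α ≠ 0)
    (hαsq : IsSquare α) (hord : orderOf α = t) {u v : ZMod q} (huv : ¬ IsSquare (u * v)) :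
    (fun i : ℕ => u * α ^ i) '' Set.Icc 1 t ∪ (fun i : ℕ => v * α ^ i) '' Set.Icc 1 t
      = {x : ZMod q | x ≠ 0} := by
  classical
  have hu : u ≠ 0 := by rintro rfl; simp at huv
  have hv : v ≠ 0 := by rintro rfl; simp at huv
  have hinj : ∀ w : ZMod q, w ≠ 0 → Set.InjOn (fun i : ℕ => w * α ^ i) (Finset.Icc 1 t) := by
    intro w hw i hi j hj h
    rw [Finset.coe_Icc] at hi hj
    exact pow_injOn_Icc hα hord hi hj (mul_left_cancel₀ hw h)
  have hdisj : Disjoint ((Finset.Icc 1 t).image (fun i : ℕ => u * α ^ i))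
      ((Finset.Icc 1 t).image (fun i : ℕ => v * α ^ i)) := by
    rw [Finset.disjoint_left]
    intro x hx hx'
    obtain ⟨i, -, rfl⟩ := Finset.mem_image.1 hx
    obtain ⟨j, -, hj⟩ := Finset.mem_image.1 hx'
    apply huv
    -- From `u α ^ i = v α ^ j`, the product `u v` is `v ^ 2 α ^ j / α ^ i`.
    have hsq : u * v = v * v * (α ^ j * (α ^ i)⁻¹) := by
      have : α ^ i ≠ 0 := pow_ne_zero _ hα
      field_simp
      linear_combination -hj
    rw [hsq]
    exact (IsSquare.mul_self v).mul ((hαsq.pow j).mul (hαsq.pow i).inv)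
  have key : (Finset.Icc 1 t).image (fun i : ℕ => u * α ^ i) ∪
      (Finset.Icc 1 t).image (fun i : ℕ => v * α ^ i) = Finset.univ.erase 0 := by
    apply Finset.eq_of_subset_of_card_le
    · intro x hx
      rw [Finset.mem_erase]
      refine ⟨?_, Finset.mem_univ _⟩
      rcases Finset.mem_union.1 hx with h | h <;> obtain ⟨i, -, rfl⟩ := Finset.mem_image.1 h
      · exact mul_ne_zero hu (pow_ne_zero _ hα)
      · exact mul_ne_zero hv (pow_ne_zero _ hα)
    · rw [Finset.card_union_of_disjoint hdisj, Finset.card_image_of_injOn (hinj u hu),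
        Finset.card_image_of_injOn (hinj v hv), Finset.card_erase_of_mem (Finset.mem_univ _),
        Finset.card_univ, ZMod.card, Nat.card_Icc]
      omega
  have := congrArg (fun s : Finset (ZMod q) => (s : Set (ZMod q))) key
  simp only [Finset.coe_union, Finset.coe_image, Finset.coe_Icc] at this
  rw [this]
  ext x
  simp

/-- The gap between the representatives of `x` and `x / 2` is half of the even number among
`x.val` and `q - x.val`. -/
lemma two_mul_gap {q : ℕ} [NeZero q] (hodd : q % 2 = 1) {β : ZMod q} (hβ : 2 * β = 1)
    (x : ZMod q) :
    2 * (((β * x).val : ℤ) - (x.val : ℤ)).natAbs = x.val ∨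
      2 * (((β * x).val : ℤ) - (x.val : ℤ)).natAbs + x.val = q := by
  have h1 := ZMod.val_lt x
  have h2 := ZMod.val_lt (β * x)
  have hcast : ((2 * (β * x).val : ℕ) : ZMod q) = (x.val : ℕ) := by
    push_cast
    rw [ZMod.natCast_zmod_val, ZMod.natCast_zmod_val]
    linear_combination x * hβ
  rw [ZMod.natCast_eq_natCast_iff'] at hcast
  rw [Nat.mod_eq_of_lt h1] at hcast
  by_cases h : 2 * (β * x).val < q
  · rw [Nat.mod_eq_of_lt h] at hcast
    omega
  · rw [Nat.mod_eq_sub_mod (by omega), Nat.mod_eq_of_lt (by omega)] at hcast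
    omega


/-- Let `q ≡ 3 (mod 8)` be prime, `q = 2t+1`, let `α` be a generator of
the cyclic group `QR(q)` of nonzero quadratic residues of `ℤ/qℤ` (i.e. `α ≠ 0`, `α` is a
square, and `orderOf α = t = |QR(q)|`), and let `β = (q+1)/2` (the inverse of `2` in
`ℤ/qℤ`).  Then `S_β = { {α^i, βα^i} : i = 1,…,t }` is a strong Skolem starter for `ℤ/qℤ`:
* the elements `α^i, βα^i` (`i = 1,…,t`) are exactly the nonzero elements of `ℤ/qℤ`;
* the differences `±(βα^i − α^i)` (`i = 1,…,t`) are exactly the nonzero elements;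
* the `t` sums `α^i + βα^i = α^i(1+β)` are pairwise distinct (the starter is strong);
* (Skolem) the map sending `i` to `|val(βα^i) − val(α^i)|` is a bijection from `{1,…,t}`
  onto `{1,…,t}`, i.e. the pairs can be re-indexed as `{xᵢ, yᵢ}` with `yᵢ > xᵢ` and
  `yᵢ − xᵢ = i` for all `i = 1,…,t`. -/
theorem strong_skolem_starter_beta_half
    (q t : ℕ) (hq : Nat.Prime q) (hq8 : q % 8 = 3) (hqt : q = 2 * t + 1)
    (α : ZMod q) (hα : α ≠ 0) (hαsq : IsSquare α) (hord : orderOf α = t)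
    (β : ZMod q) (hβ : β = (((q + 1) / 2 : ℕ) : ZMod q)) :
    -- starter property, part 1: the pair entries cover the nonzero elements
    ((fun i : ℕ => α ^ i) '' Set.Icc 1 t ∪ (fun i : ℕ => β * α ^ i) '' Set.Icc 1 t
        = {x : ZMod q | x ≠ 0}) ∧
    -- starter property, part 2: the ± differences cover the nonzero elements
    ((fun i : ℕ => β * α ^ i - α ^ i) '' Set.Icc 1 t
        ∪ (fun i : ℕ => α ^ i - β * α ^ i) '' Set.Icc 1 t = {x : ZMod q | x ≠ 0}) ∧
    -- strong: the t pair-sums α^i(1+β) are pairwise distinct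
    Set.InjOn (fun i : ℕ => α ^ i + β * α ^ i) (Set.Icc 1 t) ∧
    -- Skolem: i ↦ |val(βα^i) − val(α^i)| is a bijection {1,…,t} → {1,…,t}
    Set.BijOn
      (fun i : ℕ => (((β * α ^ i : ZMod q).val : ℤ) - ((α ^ i : ZMod q).val : ℤ)).natAbs)
      (Set.Icc 1 t) (Set.Icc 1 t) := by
  have : Fact q.Prime := ⟨hq⟩
  have hm1 : ¬ IsSquare (-1 : ZMod q) := by
    rw [ZMod.exists_sq_eq_neg_one_iff]
    omega
  have h2ns : ¬ IsSquare (2 : ZMod q) := by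
    rw [ZMod.exists_sq_eq_two_iff (by omega)]
    omega
  have h2β : 2 * β = 1 := by
    rw [hβ]
    have h : 2 * ((q + 1) / 2) = q + 1 := by omega
    have h' := congrArg (Nat.cast : ℕ → ZMod q) h
    push_cast at h'
    simpa using h'
  have hβ0 : β ≠ 0 := by
    rintro rfl
    simp at h2β
  have hβns : ¬ IsSquare β := by
    intro h
    apply h2ns
    rw [eq_inv_of_mul_eq_one_left h2β]
    exact h.inv
  have hinj := pow_injOn_Icc hα hord
  refine ⟨?_, ?_, ?_, ?_⟩
  · have := union_cosets hqt hα hαsq hord (u := 1) (v := β) (by simpa using hβns)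
    simpa only [one_mul] using this
  · have := union_cosets hqt hα hαsq hord (u := β - 1) (v := 1 - β) (by
      intro h
      apply hm1
      -- `(β - 1) (1 - β) = -β ^ 2`, so multiplying it by `2 ^ 2` gives `-1`.
      have e : (-1 : ZMod q) = (2 * 2) * ((β - 1) * (1 - β)) := by
        linear_combination (2 * β - 3) * h2β
      rw [e]
      exact (IsSquare.mul_self 2).mul h)
    simpa only [sub_mul, one_mul] using this
  · intro i hi j hj h
    by_cases hq3 : q = 3
    · obtain ⟨hi1, hi2⟩ := hi
      obtain ⟨hj1, hj2⟩ := hj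
      omega
    have h3 : (3 : ZMod q) ≠ 0 := by
      intro h
      have h' : ((3 : ℕ) : ZMod q) = 0 := by exact_mod_cast h
      rw [ZMod.natCast_eq_zero_iff] at h'
      exact hq3 ((Nat.prime_dvd_prime_iff_eq hq Nat.prime_three).1 h')
    apply hinj hi hj
    apply mul_left_cancel₀ h3
    simp only at h ⊢
    linear_combination 2 * h - (α ^ i - α ^ j) * h2β
  · have hodd : q % 2 = 1 := by omega
    have hmaps : Set.MapsTo
        (fun i : ℕ => (((β * α ^ i : ZMod q).val : ℤ) - ((α ^ i : ZMod q).val : ℤ)).natAbs)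
        (Set.Icc 1 t) (Set.Icc 1 t) := by
      intro i _
      have h := two_mul_gap hodd h2β (α ^ i)
      have hlt := ZMod.val_lt (α ^ i)
      have hpos : 0 < (α ^ i).val := ZMod.val_pos.2 (pow_ne_zero i hα)
      simp only [Set.mem_Icc]
      omega
    have hinjOn : Set.InjOn
        (fun i : ℕ => (((β * α ^ i : ZMod q).val : ℤ) - ((α ^ i : ZMod q).val : ℤ)).natAbs)
        (Set.Icc 1 t) := by
      intro i hi j hj hij
      simp only at hij
      have h := two_mul_gap hodd h2β (α ^ i)
      have h' := two_mul_gap hodd h2β (α ^ j)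
      rw [hij] at h
      have hcases : (α ^ i).val = (α ^ j).val ∨ (α ^ i).val + (α ^ j).val = q := by omega
      rcases hcases with e | e
      · exact hinj hi hj (ZMod.val_injective q e)
      · exfalso
        have e' := congrArg (Nat.cast : ℕ → ZMod q) e
        push_cast at e'
        rw [ZMod.natCast_zmod_val, ZMod.natCast_zmod_val, ZMod.natCast_self] at e'
        apply hm1
        have hne : α ^ j ≠ 0 := pow_ne_zero _ hα
        have e2 : (-1 : ZMod q) = α ^ i * (α ^ j)⁻¹ := by
          field_simp
          linear_combination -e'
        rw [e2]
        exact (hαsq.pow i).mul (hαsq.pow j).inv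
    exact ((Set.finite_Icc 1 t).injOn_iff_bijOn_of_mapsTo hmaps).1 hinjOn
end

section
/- Let q ≠ 3 be a prime with q ≡ 3 (mod 4), write q = 2t+1, let α ∈ (ℤ/qℤ)* be a generator of the cyclic group QR(q) of nonzero quadratic residues, and let β ∈ NQR(q) with β ≠ −1. Then S_β = { {α^i, βα^i} : i = 1,…,t } is a strong starter for ℤ/qℤ: the 2t elements α^i, βα^i (i = 1,…,t) are exactly the nonzero elements of ℤ/qℤ, the 2t differences ±(α^i − βα^i) (i = 1,…,t) are exactly the nonzero elements of ℤ/qℤ, and the t sums α^i(1+β) (i = 1,…,t) are pairwise distinct. -/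
/-!
Two facts drive the proof. By Euler's criterion a nonzero square `x` satisfies `x ^ t = 1`, so it is
a power of the primitive `t`-th root of unity `α`; hence `{α ^ i}` is exactly `QR(q)`. Moreover
`QR(q)` has index two, so if `a * b` is a nonresidue then the cosets `a * QR(q)` and `b * QR(q)`
together are all of the nonzero elements (`cosets_cover`). The pair entries are the case
`(a, b) = (1, β)`. The differences are the case `(1 - β, β - 1)`, where
`a * b = -(1 - β) ^ 2` is a nonresidue because `-1` is one for `q ≡ 3 (mod 4)`. Distinctness of the
sums is cancellation of `1 + β ≠ 0` together with injectivity of `i ↦ α ^ i` on `1, …, t`.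
-/

theorem isSquare_mul_of_not {q : ℕ} [Fact q.Prime] {x y : ZMod q} (hx : ¬ IsSquare x)
    (hy : ¬ IsSquare y) : IsSquare (x * y) := by
  have hx0 : x ≠ 0 := by rintro rfl; exact hx IsSquare.zero
  have hy0 : y ≠ 0 := by rintro rfl; exact hy IsSquare.zero
  rw [ZMod.euler_criterion q hx0] at hx
  rw [ZMod.euler_criterion q hy0] at hy
  rw [ZMod.euler_criterion q (mul_ne_zero hx0 hy0), mul_pow,
    (ZMod.pow_div_two_eq_neg_one_or_one q hx0).resolve_left hx,
    (ZMod.pow_div_two_eq_neg_one_or_one q hy0).resolve_left hy]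
  ring

theorem exists_pow_eq_of_isSquare {q t : ℕ} [Fact q.Prime] (hqt : q = 2 * t + 1)
    {α : ZMod q} (hord : orderOf α = t) {x : ZMod q} (hx0 : x ≠ 0) (hx : IsSquare x) :
    ∃ i ∈ Set.Icc 1 t, α ^ i = x := by
  have ht : 0 < t := by
    have := (Fact.out : q.Prime).two_le
    omega
  have : NeZero t := ⟨ht.ne'⟩
  have hprim : IsPrimitiveRoot α t := hord ▸ IsPrimitiveRoot.orderOf α
  rw [ZMod.euler_criterion q hx0, show q / 2 = t by omega] at hx
  obtain ⟨i, hi, rfl⟩ := hprim.eq_pow_of_pow_eq_one hx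
  -- The root comes with an exponent in `0, …, t - 1`; exponent `0` is traded for `t`.
  rcases Nat.eq_zero_or_pos i with rfl | hpos
  · exact ⟨t, ⟨ht, le_rfl⟩, by rw [hprim.pow_eq_one, pow_zero]⟩
  · exact ⟨i, ⟨hpos, hi.le⟩, rfl⟩

/-- If `a * b` is a nonresidue, the cosets of `QR(q) = {α ^ i}` through `a` and `b` cover the
nonzero elements. -/
theorem cosets_cover {q t : ℕ} [Fact q.Prime] (hqt : q = 2 * t + 1)
    {α : ZMod q} (hα : α ≠ 0) (hord : orderOf α = t) {a b : ZMod q} (hab : ¬ IsSquare (a * b)) :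
    (fun i : ℕ => a * α ^ i) '' Set.Icc 1 t ∪ (fun i : ℕ => b * α ^ i) '' Set.Icc 1 t
      = {x : ZMod q | x ≠ 0} := by
  have ha : a ≠ 0 := by rintro rfl; simp at hab
  have hb : b ≠ 0 := by rintro rfl; simp at hab
  -- `x` lies in the coset of `c` as soon as `x * c` is a square, since `x / c = x * c / c ^ 2`.
  have key : ∀ x c : ZMod q, x ≠ 0 → c ≠ 0 → IsSquare (x * c) →
      x ∈ (fun i : ℕ => c * α ^ i) '' Set.Icc 1 t := by
    intro x c hx hc ⟨r, hr⟩
    have hsq : IsSquare (x / c) := ⟨r / c, by field_simp; linear_combination hr⟩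
    obtain ⟨i, hi, h⟩ := exists_pow_eq_of_isSquare hqt hord (div_ne_zero hx hc) hsq
    exact ⟨i, hi, by simp only [h]; field_simp⟩
  ext x
  constructor
  · rintro (⟨i, -, rfl⟩ | ⟨i, -, rfl⟩)
    · exact mul_ne_zero ha (pow_ne_zero i hα)
    · exact mul_ne_zero hb (pow_ne_zero i hα)
  · intro hx
    by_cases hxa : IsSquare (x * a)
    · exact Or.inl (key x a hx ha hxa)
    · obtain ⟨r, hr⟩ := isSquare_mul_of_not hxa hab
      exact Or.inr (key x b hx hb ⟨r / a, by field_simp; linear_combination hr⟩)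

/-- Let `q ≠ 3` be a prime with `q ≡ 3 (mod 4)`, `q = 2t+1`, let `α` be a
generator of the cyclic group `QR(q)` of nonzero quadratic residues of `ℤ/qℤ` (i.e.
`α ≠ 0`, `α` is a square, and `orderOf α = t = |QR(q)|`), and let `β ∈ NQR(q)` (`β ≠ 0`,
`β` not a square) with `β ≠ -1`.  Then `S_β = { {α^i, βα^i} : i = 1,…,t }` is a strong
starter for `ℤ/qℤ`:
* the `2t` elements `α^i, βα^i` (`i = 1,…,t`) are exactly the nonzero elements of `ℤ/qℤ`;
* the `2t` differences `±(α^i − βα^i)` (`i = 1,…,t`) are exactly the nonzero elements;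
* the `t` sums `α^i(1+β)` (`i = 1,…,t`) are pairwise distinct. -/
theorem strong_starter_of_nonresidue
    (q t : ℕ) (hq : Nat.Prime q) (hq3 : q ≠ 3) (hq4 : q % 4 = 3) (hqt : q = 2 * t + 1)
    (α : ZMod q) (hα : α ≠ 0) (hαsq : IsSquare α) (hord : orderOf α = t)
    (β : ZMod q) (hβ0 : β ≠ 0) (hβns : ¬ IsSquare β) (hβ1 : β ≠ -1) :
    -- the pair entries cover the nonzero elements
    ((fun i : ℕ => α ^ i) '' Set.Icc 1 t ∪ (fun i : ℕ => β * α ^ i) '' Set.Icc 1 t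
        = {x : ZMod q | x ≠ 0}) ∧
    -- the ± differences cover the nonzero elements
    ((fun i : ℕ => α ^ i - β * α ^ i) '' Set.Icc 1 t
        ∪ (fun i : ℕ => β * α ^ i - α ^ i) '' Set.Icc 1 t = {x : ZMod q | x ≠ 0}) ∧
    -- strong: the t pair-sums α^i(1+β) are pairwise distinct
    Set.InjOn (fun i : ℕ => α ^ i * (1 + β)) (Set.Icc 1 t) := by
  have : Fact q.Prime := ⟨hq⟩
  have hβ : 1 - β ≠ 0 := fun h => hβns (by rw [← sub_eq_zero.mp h]; exact IsSquare.one)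
  refine ⟨?_, ?_, ?_⟩
  · simpa using cosets_cover hqt hα hord (a := 1) (b := β) (by simpa using hβns)
  · have hns : ¬ IsSquare ((1 - β) * (β - 1)) := by
      rintro ⟨r, hr⟩
      have h1 : IsSquare (-1 : ZMod q) :=
        ⟨r / (1 - β), by field_simp; linear_combination hr⟩
      exact ZMod.exists_sq_eq_neg_one_iff.mp h1 hq4
    simpa only [sub_mul, one_mul] using cosets_cover hqt hα hord hns
  · intro i hi j hj h
    have h1 : 1 + β ≠ 0 := fun h => hβ1 (by linear_combination h)
    have hpow : α ^ i = α ^ j := mul_right_cancel₀ h1 h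
    -- Exponents start at `1`, so one factor `α` is cancelled to land in `0, …, t - 1`.
    obtain ⟨⟨i, rfl⟩, ⟨j, rfl⟩⟩ :=
      And.intro (Nat.exists_eq_add_of_le' hi.1) (Nat.exists_eq_add_of_le' hj.1)
    rw [pow_succ, pow_succ] at hpow
    have hij := pow_injOn_Iio_orderOf (x := α)
      (by rw [Set.mem_Iio, hord]; exact hi.2) (by rw [Set.mem_Iio, hord]; exact hj.2)
      (mul_right_cancel₀ hα hpow)
    rw [hij]
end

section
/- Let q be a prime with q ≡ 3 (mod 8), write q = 2t+1, and let α ∈ (ℤ/qℤ)* be a generator of the cyclic group QR(q) of nonzero quadratic residues. For a nonzero element z of ℤ/qℤ let val(z) ∈ {1,…,q−1} denote its canonical integer representative. Then the map i ↦ |val(2α^i) − val(α^i)| is a bijection from {1,…,t} onto {1,…,t}; in particular, for every i ∈ {1,…,t} the integer |val(2α^i) − val(α^i)| lies in {1,…,t}. -/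
/-!
For a nonzero `z` in `ℤ/qℤ` with representative `x`, doubling gives `2x` if `x ≤ t` and `2x - q`
otherwise, so `|val (2z) - val z| = min x (q - x)`, the absolute value of the residue of `z` of least
absolute value (`natAbs_val_two_mul_sub_val`). This lies in `{1,…,t}` and determines `z` up to sign.
Since `t` is odd and `α ^ t = 1`, the powers of `α` never satisfy `α ^ i = -α ^ j` (raise both sides
to the power `t`), so the map is injective on `{1,…,t}`, hence bijective by finiteness.
-/

/-- Also true at `z = 0`, where both sides vanish. -/
lemma natAbs_val_two_mul_sub_val {q t : ℕ} [NeZero q] (hqt : q = 2 * t + 1) (z : ZMod q) :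
    (((2 * z : ZMod q).val : ℤ) - (z.val : ℤ)).natAbs = z.valMinAbs.natAbs := by
  have hz := ZMod.val_lt z
  rw [ZMod.valMinAbs_natAbs_eq_min, two_mul, ZMod.val_add]
  rcases lt_or_ge (z.val + z.val) q with h | h
  · rw [Nat.mod_eq_of_lt h]
    omega
  · rw [Nat.mod_eq_sub_mod h, Nat.mod_eq_of_lt (by omega)]
    omega

/-- The powers of an element of odd order `t` in `ℤ/qℤ` with exponents in `{1,…,t}` are distinct
even up to sign, since `-1` is not among the powers. -/
lemma eq_of_pow_eq_or_eq_neg {q t i j : ℕ} (hq : 2 < q) (ht : Odd t) {α : ZMod q}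
    (hord : orderOf α = t) (hi : i ∈ Set.Icc 1 t) (hj : j ∈ Set.Icc 1 t)
    (h : α ^ i = α ^ j ∨ α ^ i = -α ^ j) : i = j := by
  have hone : α ^ t = 1 := hord ▸ pow_orderOf_eq_one α
  have hpow (k : ℕ) : (α ^ k) ^ t = 1 := by rw [pow_right_comm, hone, one_pow]
  rcases h with h | h
  · have hfin : IsOfFinOrder α := orderOf_pos_iff.mp (hord ▸ ht.pos)
    rw [hfin.pow_eq_pow_iff_modEq, hord, Nat.modEq_iff_dvd] at h
    obtain ⟨hi1, hit⟩ := hi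
    obtain ⟨hj1, hjt⟩ := hj
    have := Int.eq_zero_of_abs_lt_dvd h (by rw [abs_lt]; omega)
    omega
  · have h1 : (1 : ZMod q) = -1 := calc
      (1 : ZMod q) = (-α ^ j) ^ t := by rw [← h, hpow i]
      _ = -1 := by rw [ht.neg_pow, hpow j]
    have : Fact (2 < q) := ⟨hq⟩
    exact absurd h1.symm ZMod.neg_one_ne_one


/-- Let `q ≡ 3 (mod 8)` be prime, `q = 2t+1`, and let `α` be a generator
of the cyclic group `QR(q)` of nonzero quadratic residues of `ℤ/qℤ` (i.e. `α ≠ 0`, `α` is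
a square, and `orderOf α = t = |QR(q)|`).  Writing `val z ∈ {1,…,q−1}` for the canonical
integer representative of a nonzero `z : ℤ/qℤ`, the map `i ↦ |val(2α^i) − val(α^i)|` is a
bijection from `{1,…,t}` onto `{1,…,t}`; in particular, for every `i ∈ {1,…,t}` the
integer `|val(2α^i) − val(α^i)|` lies in `{1,…,t}`.  (This is exactly the statement that
the starter `{ {α^i, 2α^i} : i = 1,…,t }` for `ℤ/qℤ` is Skolem.) -/
theorem skolem_bijection_beta_two
    (q t : ℕ) (hq : Nat.Prime q) (hq8 : q % 8 = 3) (hqt : q = 2 * t + 1)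
    (α : ZMod q) (hα : α ≠ 0) (hαsq : IsSquare α) (hord : orderOf α = t) :
    Set.BijOn
      (fun i : ℕ => (((2 * α ^ i : ZMod q).val : ℤ) - ((α ^ i : ZMod q).val : ℤ)).natAbs)
      (Set.Icc 1 t) (Set.Icc 1 t) ∧
    ∀ i ∈ Set.Icc 1 t,
      (((2 * α ^ i : ZMod q).val : ℤ) - ((α ^ i : ZMod q).val : ℤ)).natAbs
        ∈ Set.Icc 1 t := by
  have : Fact q.Prime := ⟨hq⟩
  simp only [natAbs_val_two_mul_sub_val hqt]
  have hmaps : Set.MapsTo (fun i : ℕ => (α ^ i).valMinAbs.natAbs) (Set.Icc 1 t) (Set.Icc 1 t) := by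
    intro i _
    have hle := ZMod.natAbs_valMinAbs_le (α ^ i)
    have hpos : (α ^ i).valMinAbs ≠ 0 := by
      rw [Ne, ZMod.valMinAbs_eq_zero]
      exact pow_ne_zero i hα
    simp only [Set.mem_Icc]
    omega
  have hinj : Set.InjOn (fun i : ℕ => (α ^ i).valMinAbs.natAbs) (Set.Icc 1 t) := by
    intro i hi j hj hij
    refine eq_of_pow_eq_or_eq_neg (by omega) (Nat.odd_iff.mpr (by omega)) hord hi hj ?_
    exact ZMod.natAbs_valMinAbs_eq_natAbs_valMinAbs.mp hij
  refine ⟨⟨hmaps, hinj, ?_⟩, hmaps⟩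
  rw [← Finset.coe_Icc] at hmaps hinj ⊢
  exact Finset.surjOn_of_injOn_of_card_le _ hmaps hinj le_rfl
end

section
/- Let q be a prime with q ≡ 3 (mod 8), write q = 2t+1, let α ∈ (ℤ/qℤ)* be a generator of the cyclic group QR(q) of nonzero quadratic residues, and let β = (q+1)/2 = 2⁻¹ in ℤ/qℤ. For a nonzero element z of ℤ/qℤ let val(z) ∈ {1,…,q−1} denote its canonical integer representative. Then the map i ↦ |val(βα^i) − val(α^i)| is a bijection from {1,…,t} onto {1,…,t}; in particular, for every i ∈ {1,…,t} the integer |val(βα^i) − val(α^i)| lies in {1,…,t}. -/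
/-!
Put `x = val (α ^ i)`. Since `β = 2⁻¹`, the representative of `β * α ^ i` is `x / 2` or
`(x + q) / 2` according to the parity of `x`, so the distance `d i` to `x` is `x / 2` or
`(q - x) / 2`. Hence `1 ≤ d i ≤ t`, and `2 * d i = ± α ^ i` in `ZMod q`
(`two_mul_natAbs_sub`). If `d i = d j`, then `α ^ i = ± α ^ j`; the minus sign is impossible,
because raising to the odd power `t` would give `1 = -1`. So `i ↦ d i` is injective on
`{1, …, t}`, hence a bijection of that set by counting.
-/

/-- Halving `x ≠ 0` modulo `q = 2 * t + 1` moves its canonical representative by some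
`d ∈ {1, …, t}` with `2 * d = ± x`. -/
lemma two_mul_natAbs_sub {q t : ℕ} (hqt : q = 2 * t + 1) {x y : ZMod q}
    (hx : x ≠ 0) (hy : 2 * y = x) :
    ((y.val : ℤ) - (x.val : ℤ)).natAbs ∈ Set.Icc 1 t ∧
      ((2 * (((y.val : ℤ) - (x.val : ℤ)).natAbs : ZMod q) = x) ∨
        (2 * (((y.val : ℤ) - (x.val : ℤ)).natAbs : ZMod q) = -x)) := by
  have : NeZero q := ⟨by omega⟩
  have hxq := x.val_lt
  have hyq := y.val_lt
  have hx0 : 0 < x.val := Nat.pos_of_ne_zero (by simpa [ZMod.val_eq_zero] using hx)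
  have hmod : (2 * y.val) % q = x.val := by
    have h : ((2 * y.val : ℕ) : ZMod q) = ((x.val : ℕ) : ZMod q) := by
      push_cast
      simpa using hy
    rw [ZMod.natCast_eq_natCast_iff', Nat.mod_eq_of_lt hxq] at h
    exact h
  by_cases hlt : 2 * y.val < q
  · rw [Nat.mod_eq_of_lt hlt] at hmod
    refine ⟨⟨by omega, by omega⟩, Or.inl ?_⟩
    have h : 2 * ((y.val : ℤ) - (x.val : ℤ)).natAbs = x.val := by omega
    have hc := congrArg (Nat.cast : ℕ → ZMod q) h
    push_cast at hc
    simpa using hc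
  · rw [Nat.mod_eq_sub_mod (by omega), Nat.mod_eq_of_lt (by omega)] at hmod
    refine ⟨⟨by omega, by omega⟩, Or.inr ?_⟩
    have h : 2 * ((y.val : ℤ) - (x.val : ℤ)).natAbs + x.val = q := by omega
    have hc := congrArg (Nat.cast : ℕ → ZMod q) h
    push_cast at hc
    simp only [ZMod.natCast_val, ZMod.cast_id', id, CharP.cast_eq_zero] at hc
    exact eq_neg_of_add_eq_zero_left (by simpa using hc)

/-- Let `q ≡ 3 (mod 8)` be prime, `q = 2t+1`, let `α` be a generator of
the cyclic group `QR(q)` of nonzero quadratic residues of `ℤ/qℤ` (i.e. `α ≠ 0`, `α` is a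
square, and `orderOf α = t = |QR(q)|`), and let `β = (q+1)/2 = 2⁻¹` in `ℤ/qℤ`.  Writing
`val z ∈ {1,…,q−1}` for the canonical integer representative of a nonzero `z : ℤ/qℤ`, the
map `i ↦ |val(βα^i) − val(α^i)|` is a bijection from `{1,…,t}` onto `{1,…,t}`; in
particular, for every `i ∈ {1,…,t}` the integer `|val(βα^i) − val(α^i)|` lies in
`{1,…,t}`.  (This is exactly the statement that the starter `{ {α^i, 2⁻¹α^i} : i = 1,…,t }`
for `ℤ/qℤ` is Skolem.) -/
theorem skolem_bijection_beta_half
    (q t : ℕ) (hq : Nat.Prime q) (hq8 : q % 8 = 3) (hqt : q = 2 * t + 1)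
    (α : ZMod q) (hα : α ≠ 0) (hαsq : IsSquare α) (hord : orderOf α = t)
    (β : ZMod q) (hβ : β = (((q + 1) / 2 : ℕ) : ZMod q)) :
    Set.BijOn
      (fun i : ℕ => (((β * α ^ i : ZMod q).val : ℤ) - ((α ^ i : ZMod q).val : ℤ)).natAbs)
      (Set.Icc 1 t) (Set.Icc 1 t) ∧
    ∀ i ∈ Set.Icc 1 t,
      (((β * α ^ i : ZMod q).val : ℤ) - ((α ^ i : ZMod q).val : ℤ)).natAbs
        ∈ Set.Icc 1 t := by
  have : Fact q.Prime := ⟨hq⟩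
  have hβ2 : 2 * β = 1 := by
    have h : 2 * ((q + 1) / 2) = q + 1 := by omega
    have hc := congrArg (Nat.cast : ℕ → ZMod q) h
    rw [Nat.cast_mul, ← hβ] at hc
    simpa using hc
  have key (i : ℕ) := two_mul_natAbs_sub hqt (x := α ^ i) (y := β * α ^ i)
    (pow_ne_zero i hα) (by rw [← mul_assoc, hβ2, one_mul])
  have hαt : α ^ t = 1 := hord ▸ pow_orderOf_eq_one α
  have hpow (i : ℕ) : (α ^ i) ^ t = 1 := by rw [← pow_mul, mul_comm, pow_mul, hαt, one_pow]
  have hodd : Odd t := Nat.odd_iff.2 (by omega)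
  have : Fact (2 < q) := ⟨by omega⟩
  -- A nontrivial sign cannot occur, as `-1` is not a power of `α`.
  have hneg (i j : ℕ) : α ^ i ≠ -α ^ j := by
    intro h
    have hc := hpow i
    rw [h, hodd.neg_pow, hpow j] at hc
    exact ZMod.neg_one_ne_one hc
  have hmaps : Set.MapsTo
      (fun i : ℕ => (((β * α ^ i : ZMod q).val : ℤ) - ((α ^ i : ZMod q).val : ℤ)).natAbs)
      (Set.Icc 1 t) (Set.Icc 1 t) := fun i _ => (key i).1
  have hinj : Set.InjOn
      (fun i : ℕ => (((β * α ^ i : ZMod q).val : ℤ) - ((α ^ i : ZMod q).val : ℤ)).natAbs)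
      (Set.Icc 1 t) := by
    intro i hi j hj hij
    have hi2 := (key i).2
    have hj2 := (key j).2
    simp only at hij
    rw [hij] at hi2
    have hpq : α ^ i = α ^ j := by
      rcases hi2 with h1 | h1 <;> rcases hj2 with h2 | h2
      · exact h1.symm.trans h2
      · exact absurd (h1.symm.trans h2) (hneg i j)
      · exact absurd (h2.symm.trans h1) (hneg j i)
      · exact neg_injective (h1.symm.trans h2)
    obtain ⟨hi1, hit⟩ := hi
    obtain ⟨hj1, hjt⟩ := hj
    -- Exponents are compared after a shift by one, to lie in `{0, …, t - 1}`.
    have hpred : α ^ (i - 1) = α ^ (j - 1) := by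
      apply mul_right_cancel₀ hα
      rwa [← pow_succ, ← pow_succ, Nat.sub_add_cancel hi1, Nat.sub_add_cancel hj1]
    have := pow_injOn_Iio_orderOf (x := α) (by simp only [Set.mem_Iio]; omega)
      (by simp only [Set.mem_Iio]; omega) hpred
    omega
  refine ⟨⟨hmaps, hinj, ?_⟩, hmaps⟩
  have h := Finset.surjOn_of_injOn_of_card_le (s := Finset.Icc 1 t) (t := Finset.Icc 1 t) _
    (by simpa only [Finset.coe_Icc] using hmaps) (by simpa only [Finset.coe_Icc] using hinj) le_rfl
  simpa only [Finset.coe_Icc] using h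
end
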